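/- (Theorem 4(i)) Let γ̃_n be random elements of Γ with γ̃_n → γ₀ almost surely, and let g̃_n be random positive continuous functions on [0,A] with sup_{t∈[0,A]} |log g̃_n(t) − log g₀(t)| → 0 almost surely (as guaranteed by Theorem 3). Define the residuals ε̃ᵢ = yᵢ − log(1+γ̃_n·xᵢ) − log g̃_n(zᵢ) for i=1,…,n, and the estimator φ̃_n = [Σ_{i=2}^n ε̃ᵢ·ε̃ᵢ₋₁] / [Σ_{i=2}^n ε̃ᵢ²]. Then φ̃_n converges to φ almost surely as n→∞. -/

import Mathlib

open MeasureTheory ProbabilityTheory Filter Set Topology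

/-- The residual `ε̃ᵢ = yᵢ - log(1+γ̃ xᵢ) - log g̃(zᵢ)`, where
`yᵢ = log(1+γ₀xᵢ) + log g₀(zᵢ) + εᵢ` with `xᵢ = x(iΔ/n)`, `zᵢ = z(iΔ/n)`. -/
noncomputable def resid {Ω : Type*} (Δ γ₀ : ℝ) (x z g₀ : ℝ → ℝ) (ε : ℤ → Ω → ℝ)
    (γt : ℝ) (gt : ℝ → ℝ) (n i : ℕ) (ω : Ω) : ℝ :=
  (Real.log (1 + γ₀ * x ((i : ℝ) * Δ / n)) + Real.log (g₀ (z ((i : ℝ) * Δ / n))) +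
      ε (i : ℤ) ω)
    - Real.log (1 + γt * x ((i : ℝ) * Δ / n)) - Real.log (gt (z ((i : ℝ) * Δ / n)))

/-- The autoregression-coefficient estimator
`φ̃ₙ = (∑_{i=2}^n ε̃ᵢ ε̃ᵢ₋₁) / (∑_{i=2}^n ε̃ᵢ²)`. -/
noncomputable def phiTil {Ω : Type*} (Δ γ₀ : ℝ) (x z g₀ : ℝ → ℝ) (ε : ℤ → Ω → ℝ)
    (γt : ℝ) (gt : ℝ → ℝ) (n : ℕ) (ω : Ω) : ℝ :=
  (∑ i ∈ Finset.Icc 2 n,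
      resid Δ γ₀ x z g₀ ε γt gt n i ω * resid Δ γ₀ x z g₀ ε γt gt n (i - 1) ω) /
    (∑ i ∈ Finset.Icc 2 n, (resid Δ γ₀ x z g₀ ε γt gt n i ω) ^ 2)

/-
The second moments of `ε` can be computed path by path. By the strong law, applied along residue
classes so that the products at a fixed lag become independent, almost every path of the innovations
`u` has empirical variance tending to `σ²` and empirical autocovariances tending to `0`. The
contraction `e (i + 1) = φ * e i + u (i + 1)` first gives `∑ i < n, e i ^ 2 = O(n)`. Substituting it
repeatedly, the average of `u (i + 1) * e i` is, up to `o(1)`, `φ ^ K` times an average that is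
bounded uniformly in `K`, so it vanishes in the limit. Squaring the recursion, or multiplying it by
`e i`, then shows that `e i ^ 2` and `e (i + 1) * e i` have averages tending to `σ² / (1 - φ ^ 2)`
and `φ * σ² / (1 - φ ^ 2)`. The residuals are uniformly close to `ε`, which perturbs neither
average, and `φ` is the quotient of the two limits.
-/

open Asymptotics

lemma isLittleO_const_natCast_atTop (c : ℝ) :
    (fun _ => c) =o[atTop] fun n : ℕ => (n : ℝ) :=
  (isLittleO_const_id_atTop c).comp_tendsto tendsto_natCast_atTop_atTop

lemma isTheta_natCast_add_one :
    (fun n : ℕ => (n : ℝ) + 1) =Θ[atTop] fun n : ℕ => (n : ℝ) :=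
  (IsEquivalent.refl.add_isLittleO (isLittleO_const_natCast_atTop 1)).isTheta

lemma tendsto_zero_of_succ_le_mul_add {a : ℝ} {b c : ℕ → ℝ} (ha₀ : 0 ≤ a) (ha₁ : a < 1)
    (hb : ∀ n, 0 ≤ b n) (hbc : ∀ n, b (n + 1) ≤ a * b n + c n) (hc : Tendsto c atTop (𝓝 0)) :
    Tendsto b atTop (𝓝 0) := by
  refine tendsto_order.2 ⟨fun x hx => .of_forall fun n => hx.trans_le (hb n), fun x hx => ?_⟩
  have hx' : 0 < (1 - a) * (x / 2) := mul_pos (sub_pos.2 ha₁) (half_pos hx)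
  obtain ⟨N, hN⟩ := eventually_atTop.1 (hc.eventually_lt_const hx')
  have hgeom (m : ℕ) : b (m + N) - x / 2 ≤ a ^ m * (b N - x / 2) := by
    simpa only [zero_add] using le_geom (u := fun m => b (m + N) - x / 2) ha₀ m fun k _ => by
      rw [add_right_comm]
      linarith [hbc (k + N), hN (k + N) (Nat.le_add_left N k)]
  have hpow : Tendsto (fun m : ℕ => a ^ m * (b N - x / 2)) atTop (𝓝 0) := by
    simpa only [zero_mul] using (tendsto_pow_atTop_nhds_zero_of_lt_one ha₀ ha₁).mul_const _
  rw [← map_add_atTop_eq_nat N, eventually_map]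
  filter_upwards [hpow.eventually_lt_const (half_pos hx)] with m hm
  linarith [hgeom m]

lemma isLittleO_natCast_of_succ_sub_mul {a : ℝ} {f : ℕ → ℝ} (ha : |a| < 1)
    (h : (fun n => f (n + 1) - a * f n) =o[atTop] fun n : ℕ => (n : ℝ)) :
    f =o[atTop] fun n : ℕ => (n : ℝ) := by
  rw [← isTheta_natCast_add_one.isLittleO_congr_right] at h ⊢
  have hforce : Tendsto (fun n => |(f (n + 1) - a * f n) / ((n : ℝ) + 1)|) atTop (𝓝 0) := by
    simpa only [abs_zero] using h.tendsto_div_nhds_zero.abs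
  have hquot : Tendsto (fun n => |f n / ((n : ℝ) + 1)|) atTop (𝓝 0) := by
    refine tendsto_zero_of_succ_le_mul_add (abs_nonneg a) ha (fun n => abs_nonneg _)
      (fun n => ?_) hforce
    have hn : (0 : ℝ) < (n : ℝ) + 1 := by positivity
    calc |f (n + 1) / (((n + 1 : ℕ) : ℝ) + 1)|
        ≤ |f (n + 1) / ((n : ℝ) + 1)| := by
          have hle : (n : ℝ) + 1 ≤ ((n + 1 : ℕ) : ℝ) + 1 := by
            rw [Nat.cast_add_one]
            linarith
          rw [abs_div, abs_div, abs_of_pos hn, abs_of_pos (hn.trans_le hle)]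
          exact div_le_div_of_nonneg_left (abs_nonneg _) hn hle
      _ = |a * (f n / ((n : ℝ) + 1)) + (f (n + 1) - a * f n) / ((n : ℝ) + 1)| := by
          rw [← mul_div_assoc, ← add_div, add_sub_cancel]
      _ ≤ |a| * |f n / ((n : ℝ) + 1)| + |(f (n + 1) - a * f n) / ((n : ℝ) + 1)| := by
          rw [← abs_mul]
          exact abs_add_le _ _
  exact (isLittleO_iff_tendsto fun n hn => absurd hn n.cast_add_one_ne_zero).2
    ((tendsto_zero_iff_abs_tendsto_zero _).2 hquot)

-- Iterating the hypothesis gives `a 0 = φ ^ K * a K + o(1)` for every fixed `K`.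
lemma tendsto_zero_of_tendsto_sub_mul_succ {ι : Type*} {l : Filter ι} {φ B : ℝ} (hφ : |φ| < 1)
    {a : ℕ → ι → ℝ} (h : ∀ K, Tendsto (fun n => a K n - φ * a (K + 1) n) l (𝓝 0))
    (hB : ∀ K, ∀ᶠ n in l, |a K n| ≤ B) : Tendsto (a 0) l (𝓝 0) := by
  have hiter (K : ℕ) : Tendsto (fun n => a 0 n - φ ^ K * a K n) l (𝓝 0) := by
    induction K with
    | zero => simpa only [pow_zero, one_mul, sub_self] using tendsto_const_nhds
    | succ K ih =>
      have hstep := ih.add ((h K).const_mul (φ ^ K))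
      rw [mul_zero, add_zero] at hstep
      exact hstep.congr fun n => by ring
  have hpow : Tendsto (fun K : ℕ => |φ| ^ K * B) atTop (𝓝 0) := by
    simpa only [zero_mul] using
      (tendsto_pow_atTop_nhds_zero_of_lt_one (abs_nonneg φ) hφ).mul_const B
  rw [Metric.tendsto_nhds]
  intro η hη
  obtain ⟨K, hK⟩ := (hpow.eventually_lt_const (half_pos hη)).exists
  filter_upwards [hB K, Metric.tendsto_nhds.1 (hiter K) _ (half_pos hη)] with n hBn hn
  rw [Real.dist_0_eq_abs] at hn ⊢
  calc |a 0 n| = |(a 0 n - φ ^ K * a K n) + φ ^ K * a K n| := by rw [sub_add_cancel]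
    _ ≤ |a 0 n - φ ^ K * a K n| + |φ| ^ K * |a K n| := by
      rw [← abs_pow, ← abs_mul]
      exact abs_add_le _ _
    _ ≤ |a 0 n - φ ^ K * a K n| + |φ| ^ K * B := by gcongr
    _ < η := by linarith

lemma sum_range_eq_sum_sum_residueClass {M : Type*} [AddCommMonoid M] {p : ℕ} (hp : 0 < p)
    (f : ℕ → M) (n : ℕ) :
    ∑ i ∈ Finset.range n, f i =
      ∑ r ∈ Finset.range p, ∑ l ∈ Finset.range ((n + p - 1 - r) / p), f (r + p * l) := by
  rw [← Finset.sum_fiberwise_of_maps_to (g := (· % p)) (t := Finset.range p)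
    fun i _ => Finset.mem_range.2 (Nat.mod_lt i hp)]
  refine Finset.sum_congr rfl fun r hr => ?_
  rw [Finset.mem_range] at hr
  have hlt (l : ℕ) : l < (n + p - 1 - r) / p ↔ r + p * l < n := by
    rw [← Nat.add_one_le_iff, Nat.le_div_iff_mul_le hp, mul_comm, mul_add_one]
    omega
  refine Finset.sum_nbij' (· / p) (fun l => r + p * l) (fun i hi => ?_) (fun l hl => ?_)
    (fun i hi => ?_) (fun l _ => ?_) (fun i hi => ?_)
  · rw [Finset.mem_filter, Finset.mem_range] at hi
    rw [Finset.mem_range, hlt, ← hi.2, Nat.mod_add_div]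
    exact hi.1
  · rw [Finset.mem_filter, Finset.mem_range, Nat.add_mul_mod_self_left, Nat.mod_eq_of_lt hr]
    exact ⟨(hlt l).1 (Finset.mem_range.1 hl), rfl⟩
  · rw [← (Finset.mem_filter.1 hi).2, Nat.mod_add_div]
  · rw [Nat.add_mul_div_left _ _ hp, Nat.div_eq_of_lt hr, zero_add]
  · rw [← (Finset.mem_filter.1 hi).2, Nat.mod_add_div]

/-- `HasCesaroMean f L` says that the averages `(f 0 + ⋯ + f (n - 1)) / n` converge to `L`: the
mode in which empirical moments of a sample path converge. -/
def HasCesaroMean (f : ℕ → ℝ) (L : ℝ) : Prop :=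
  Tendsto (fun n : ℕ => (∑ i ∈ Finset.range n, f i) / n) atTop (𝓝 L)

namespace HasCesaroMean

variable {f g : ℕ → ℝ} {L M : ℝ}

lemma const (c : ℝ) : HasCesaroMean (fun _ => c) c := by
  refine tendsto_const_nhds.congr' ?_
  filter_upwards [eventually_ne_atTop 0] with n hn
  rw [Finset.sum_const, Finset.card_range, nsmul_eq_mul,
    mul_div_cancel_left₀ c (Nat.cast_ne_zero.2 hn)]

lemma add (hf : HasCesaroMean f L) (hg : HasCesaroMean g M) :
    HasCesaroMean (fun i => f i + g i) (L + M) :=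
  (Tendsto.add hf hg).congr fun n => by rw [Finset.sum_add_distrib, add_div]

lemma const_mul (c : ℝ) (hf : HasCesaroMean f L) : HasCesaroMean (fun i => c * f i) (c * L) :=
  (Tendsto.const_mul c hf).congr fun n => by rw [← Finset.mul_sum, mul_div_assoc]

lemma sub (hf : HasCesaroMean f L) (hg : HasCesaroMean g M) :
    HasCesaroMean (fun i => f i - g i) (L - M) :=
  (Tendsto.sub hf hg).congr fun n => by rw [Finset.sum_sub_distrib, sub_div]

lemma isBigO_sum (hf : HasCesaroMean f L) :
    (fun n : ℕ => ∑ i ∈ Finset.range n, f i) =O[atTop] fun n => (n : ℝ) :=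
  isBigO_of_div_tendsto_nhds (.of_forall fun n hn => by simp [Nat.cast_eq_zero.1 hn]) L hf

lemma tendsto_sum_range_succ_div (hf : HasCesaroMean f L) :
    Tendsto (fun n : ℕ => (∑ i ∈ Finset.range (n + 1), f i) / n) atTop (𝓝 L) := by
  have hratio : Tendsto (fun n : ℕ => 1 + 1 / (n : ℝ)) atTop (𝓝 1) := by
    simpa using tendsto_const_nhds.add (tendsto_one_div_atTop_nhds_zero_nat (𝕜 := ℝ))
  have h := (hf.comp (tendsto_add_atTop_nat 1)).mul hratio
  rw [mul_one] at h
  refine h.congr' ?_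
  filter_upwards [eventually_ne_atTop 0] with n hn
  have hn' : (n : ℝ) ≠ 0 := Nat.cast_ne_zero.2 hn
  simp only [Function.comp_apply, Nat.cast_add_one]
  field_simp

lemma tendsto_sum_Icc_div (hf : HasCesaroMean f L) (k : ℕ) :
    Tendsto (fun n : ℕ => (∑ i ∈ Finset.Icc k n, f i) / n) atTop (𝓝 L) := by
  have h := hf.tendsto_sum_range_succ_div.sub
    (tendsto_const_div_atTop_nhds_zero_nat (∑ i ∈ Finset.range k, f i))
  rw [sub_zero] at h
  refine h.congr' ?_
  filter_upwards [eventually_ge_atTop k] with n hn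
  rw [← sub_div, ← Finset.sum_Ico_eq_sub _ (by omega), Finset.Ico_add_one_right_eq_Icc]

lemma isLittleO_self (hf : HasCesaroMean f L) : f =o[atTop] fun n => (n : ℝ) := by
  have h := hf.tendsto_sum_range_succ_div.sub hf
  rw [sub_self] at h
  refine (isLittleO_iff_tendsto' ?_).2 (h.congr fun n => ?_)
  · filter_upwards [eventually_ne_atTop 0] with n hn h₀
    exact absurd (Nat.cast_eq_zero.1 h₀) hn
  · rw [Finset.sum_range_succ, add_div, add_sub_cancel_left]

lemma of_succ (hf : HasCesaroMean (fun i => f (i + 1)) L) : HasCesaroMean f L := by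
  refine (tendsto_add_atTop_iff_nat 1).1 ?_
  have h := (Tendsto.add hf (tendsto_const_div_atTop_nhds_zero_nat (f 0))).mul
    (tendsto_natCast_div_add_atTop (1 : ℝ))
  rw [add_zero, mul_one] at h
  refine h.congr' ?_
  filter_upwards [eventually_ne_atTop 0] with n hn
  have hn' : (n : ℝ) ≠ 0 := Nat.cast_ne_zero.2 hn
  rw [Finset.sum_range_succ', Nat.cast_add_one]
  field_simp

lemma succ (hf : HasCesaroMean f L) : HasCesaroMean (fun i => f (i + 1)) L := by
  have h := hf.tendsto_sum_range_succ_div.sub (tendsto_const_div_atTop_nhds_zero_nat (f 0))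
  rw [sub_zero] at h
  exact h.congr fun n => by rw [← sub_div, Finset.sum_range_succ', add_sub_cancel_right]

lemma nat_add (hf : HasCesaroMean f L) (k : ℕ) : HasCesaroMean (fun i => f (i + k)) L := by
  induction k with
  | zero => exact hf
  | succ k ih => simpa only [add_assoc, add_comm 1 k] using ih.succ

lemma sub_succ (hf : f =o[atTop] fun n => (n : ℝ)) :
    HasCesaroMean (fun i => f i - f (i + 1)) 0 := by
  have h := (tendsto_const_div_atTop_nhds_zero_nat (f 0)).sub hf.tendsto_div_nhds_zero
  rw [sub_zero] at h
  exact h.congr fun n => by rw [Finset.sum_range_sub', sub_div]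

lemma iff_isLittleO : HasCesaroMean f L ↔
    (fun n : ℕ => ∑ i ∈ Finset.range n, f i - n * L) =o[atTop] fun n : ℕ => (n : ℝ) := by
  have hne : ∀ᶠ n : ℕ in atTop, (n : ℝ) ≠ 0 :=
    (eventually_ne_atTop 0).mono fun n => Nat.cast_ne_zero.2
  rw [isLittleO_iff_tendsto' (hne.mono fun n hn h₀ => absurd h₀ hn), HasCesaroMean,
    ← tendsto_sub_nhds_zero_iff]
  refine tendsto_congr' (hne.mono fun n hn => ?_)
  dsimp only
  rw [sub_div, mul_div_cancel_left₀ L hn]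

-- The errors `E n = ∑ i < n, f i - n * m / (1 - a)` satisfy `E (n + 1) = a * E n + o(n)`.
lemma of_succ_sub_mul {a m : ℝ} (ha : |a| < 1)
    (h : HasCesaroMean (fun i => f (i + 1) - a * f i) m) : HasCesaroMean f (m / (1 - a)) := by
  have ha' : 1 - a ≠ 0 := (sub_pos.2 (abs_lt.1 ha).2).ne'
  set L := m / (1 - a)
  have hm : m = (1 - a) * L := (mul_div_cancel₀ m ha').symm
  rw [iff_isLittleO] at h ⊢
  refine isLittleO_natCast_of_succ_sub_mul ha
    ((h.add (isLittleO_const_natCast_atTop (f 0 - L))).congr_left fun n => ?_)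
  rw [Finset.sum_range_succ', Finset.sum_sub_distrib, ← Finset.mul_sum, hm, Nat.cast_add_one]
  ring

lemma of_residueClasses {p : ℕ} (hp : 0 < p)
    (h : ∀ r < p, HasCesaroMean (fun l => f (r + p * l)) L) : HasCesaroMean f L := by
  suffices H : (fun n : ℕ => ∑ i ∈ Finset.range n, (f i - L)) =o[atTop] fun n : ℕ => (n : ℝ) by
    refine iff_isLittleO.2 (H.congr_left fun n => ?_)
    rw [Finset.sum_sub_distrib, Finset.sum_const, Finset.card_range, nsmul_eq_mul]
  simp only [sum_range_eq_sum_sum_residueClass hp fun i => f i - L]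
  refine .fun_sum fun r hr => ?_
  rw [Finset.mem_range] at hr
  set m : ℕ → ℕ := fun n => (n + p - 1 - r) / p
  have hm : Tendsto m atTop atTop := by
    refine tendsto_atTop.2 fun b => ?_
    filter_upwards [eventually_ge_atTop (r + b * p)] with n hn
    exact (Nat.le_div_iff_mul_le hp).2 (by omega)
  have hmn (n : ℕ) : m n ≤ n := by
    have hnp := Nat.le_mul_of_pos_right n hp
    refine Nat.le_of_lt_succ ((Nat.div_lt_iff_lt_mul hp).2 ?_)
    rw [Nat.succ_mul]
    omega
  have hsub : HasCesaroMean (fun l => f (r + p * l) - L) 0 := by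
    simpa only [sub_self] using (h r hr).sub (const L)
  have hbig : (fun n => (m n : ℝ)) =O[atTop] fun n : ℕ => (n : ℝ) :=
    .of_norm_le fun n => by simpa using hmn n
  have hsum := (iff_isLittleO.1 hsub).comp_tendsto hm
  simp only [Function.comp_def, mul_zero, sub_zero] at hsum
  exact hsum.trans_isBigO hbig

end HasCesaroMean

section Autoregression

/-- `IsAutoregressive φ u e` says that `e` solves the first-order autoregression with coefficient
`φ` driven by the innovations `u`. -/
def IsAutoregressive (φ : ℝ) (u e : ℕ → ℝ) : Prop :=
  ∀ i, e (i + 1) = φ * e i + u (i + 1)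

/-- `IsEmpiricalWhiteNoise u v` says that the empirical autocovariances of the sequence `u` are
those of a white noise of variance `v`: the limit is `v` at lag zero and vanishes at all others. -/
structure IsEmpiricalWhiteNoise (u : ℕ → ℝ) (v : ℝ) : Prop where
  sq : HasCesaroMean (fun i => u i ^ 2) v
  mul_shift : ∀ k, HasCesaroMean (fun i => u (i + (k + 1)) * u i) 0

variable {φ v : ℝ} {u e : ℕ → ℝ}

lemma sq_mul_add_le (hφ : |φ| < 1) (a b : ℝ) :
    (φ * a + b) ^ 2 ≤ |φ| * a ^ 2 + b ^ 2 / (1 - |φ|) := by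
  have hφ' : 0 < 1 - |φ| := sub_pos.2 hφ
  have hab : φ * (a * b) ≤ |φ| * (|a| * |b|) := by
    rw [← abs_mul, ← abs_mul]
    exact le_abs_self _
  have hsq : |φ| * a ^ 2 + b ^ 2 / (1 - |φ|) - (φ * a + b) ^ 2
      = |φ| / (1 - |φ|) * ((1 - |φ|) * |a| - |b|) ^ 2
        + 2 * (|φ| * (|a| * |b|) - φ * (a * b)) := by
    rw [← sq_abs a, ← sq_abs b, add_sq, mul_pow, ← sq_abs φ, ← sq_abs a, ← sq_abs b]
    field_simp
    ring
  have hnonneg : 0 ≤ |φ| / (1 - |φ|) * ((1 - |φ|) * |a| - |b|) ^ 2 := by positivity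
  linarith

namespace IsAutoregressive

lemma sum_sq_le (h : IsAutoregressive φ u e) (hφ : |φ| < 1) (n : ℕ) :
    (1 - |φ|) * ∑ i ∈ Finset.range n, e i ^ 2
      ≤ e 0 ^ 2 + (∑ i ∈ Finset.range n, u (i + 1) ^ 2) / (1 - |φ|) := by
  have hstep : ∑ i ∈ Finset.range n, e (i + 1) ^ 2 ≤ |φ| * ∑ i ∈ Finset.range n, e i ^ 2
      + (∑ i ∈ Finset.range n, u (i + 1) ^ 2) / (1 - |φ|) := by
    rw [Finset.mul_sum, Finset.sum_div, ← Finset.sum_add_distrib]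
    exact Finset.sum_le_sum fun i _ => (congrArg (· ^ 2) (h i)).trans_le (sq_mul_add_le hφ _ _)
  have hmono : ∑ i ∈ Finset.range n, e i ^ 2
      ≤ ∑ i ∈ Finset.range n, e (i + 1) ^ 2 + e 0 ^ 2 := by
    rw [← Finset.sum_range_succ' fun i => e i ^ 2, Finset.sum_range_succ]
    exact le_add_of_nonneg_right (sq_nonneg _)
  linarith

lemma isBigO_sum_sq (h : IsAutoregressive φ u e) (hφ : |φ| < 1)
    (hu : HasCesaroMean (fun i => u i ^ 2) v) :
    (fun n : ℕ => ∑ i ∈ Finset.range n, e i ^ 2) =O[atTop] fun n : ℕ => (n : ℝ) := by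
  have hφ' : 0 < 1 - |φ| := sub_pos.2 hφ
  refine IsBigO.trans (.of_norm_le fun n => ?_)
    (((isLittleO_const_natCast_atTop (e 0 ^ 2)).isBigO.add
      (hu.succ.isBigO_sum.const_mul_left (1 - |φ|)⁻¹)).const_mul_left (1 - |φ|)⁻¹)
  rw [Real.norm_of_nonneg (by positivity), inv_mul_eq_div, inv_mul_eq_div, le_div_iff₀' hφ']
  exact h.sum_sq_le hφ n

lemma isBigO_sq (h : IsAutoregressive φ u e) (hφ : |φ| < 1)
    (hu : HasCesaroMean (fun i => u i ^ 2) v) :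
    (fun n : ℕ => e n ^ 2) =O[atTop] fun n : ℕ => (n : ℝ) := by
  have hsum := (h.isBigO_sum_sq hφ hu).comp_tendsto (tendsto_add_atTop_nat 1)
  simp only [Function.comp_def, Nat.cast_add_one] at hsum
  refine IsBigO.trans (.of_norm_le fun n => ?_) (hsum.trans isTheta_natCast_add_one.isBigO)
  rw [Real.norm_of_nonneg (sq_nonneg _)]
  exact Finset.single_le_sum (f := fun i => e i ^ 2) (fun i _ => sq_nonneg _)
    (Finset.self_mem_range_succ n)

lemma exists_forall_eventually_abs_mean_shift_mul_le (h : IsAutoregressive φ u e) (hφ : |φ| < 1)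
    (hu : HasCesaroMean (fun i => u i ^ 2) v) :
    ∃ B, ∀ K, ∀ᶠ n : ℕ in atTop, |(∑ i ∈ Finset.range n, u (i + (K + 1)) * e i) / n| ≤ B := by
  obtain ⟨C, hC⟩ := (h.isBigO_sum_sq hφ hu).bound
  refine ⟨v + 1 + C, fun K => ?_⟩
  filter_upwards [hC, (hu.nat_add (K + 1)).eventually_lt_const (lt_add_one v),
    eventually_gt_atTop 0] with n hen hun hn
  have hn' : (0 : ℝ) < n := Nat.cast_pos.2 hn
  rw [Real.norm_of_nonneg (by positivity), Real.norm_of_nonneg hn'.le] at hen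
  rw [div_lt_iff₀ hn'] at hun
  rw [abs_div, abs_of_pos hn', div_le_iff₀ hn']
  calc |∑ i ∈ Finset.range n, u (i + (K + 1)) * e i|
      ≤ ∑ i ∈ Finset.range n, (u (i + (K + 1)) ^ 2 + e i ^ 2) := by
        refine (Finset.abs_sum_le_sum_abs _ _).trans (Finset.sum_le_sum fun i _ => ?_)
        rw [abs_mul, ← sq_abs (u _), ← sq_abs (e _)]
        nlinarith [two_mul_le_add_sq |u (i + (K + 1))| |e i|,
          mul_nonneg (abs_nonneg (u (i + (K + 1)))) (abs_nonneg (e i))]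
    _ = ∑ i ∈ Finset.range n, u (i + (K + 1)) ^ 2 + ∑ i ∈ Finset.range n, e i ^ 2 :=
        Finset.sum_add_distrib
    _ ≤ (v + 1 + C) * n := by linarith

lemma hasCesaroMean_shift_mul_sub (h : IsAutoregressive φ u e) (hφ : |φ| < 1)
    (hu : IsEmpiricalWhiteNoise u v) (K : ℕ) :
    HasCesaroMean (fun i => u (i + (K + 1)) * e i - φ * (u (i + (K + 1 + 1)) * e i)) 0 := by
  have hsmall : (fun n => u (n + (K + 1)) * e n) =o[atTop] fun n : ℕ => (n : ℝ) := by
    refine IsLittleO.of_pow (n := 2) ?_ two_ne_zero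
    exact ((hu.sq.nat_add (K + 1)).isLittleO_self.mul_isBigO (h.isBigO_sq hφ hu.sq)).congr
      (fun n => (mul_pow _ _ 2).symm) fun n => (sq (n : ℝ)).symm
  have hmean := (HasCesaroMean.sub_succ hsmall).add (hu.mul_shift K).succ
  rw [add_zero] at hmean
  convert hmean using 2 with i
  rw [h i, add_assoc i, add_comm 1 (K + 1)]
  ring

lemma hasCesaroMean_succ_mul (h : IsAutoregressive φ u e) (hφ : |φ| < 1)
    (hu : IsEmpiricalWhiteNoise u v) : HasCesaroMean (fun i => u (i + 1) * e i) 0 := by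
  obtain ⟨B, hB⟩ := h.exists_forall_eventually_abs_mean_shift_mul_le hφ hu.sq
  refine tendsto_zero_of_tendsto_sub_mul_succ (B := B) hφ
    (a := fun K n => (∑ i ∈ Finset.range n, u (i + (K + 1)) * e i) / n) (fun K => ?_) hB
  refine (h.hasCesaroMean_shift_mul_sub hφ hu K).congr fun n => ?_
  rw [Finset.sum_sub_distrib, ← Finset.mul_sum, sub_div, mul_div_assoc]

lemma hasCesaroMean_sq (h : IsAutoregressive φ u e) (hφ : |φ| < 1)
    (hu : IsEmpiricalWhiteNoise u v) : HasCesaroMean (fun i => e i ^ 2) (v / (1 - φ ^ 2)) := by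
  have hφ₂ : |φ ^ 2| < 1 := by
    rw [abs_pow]
    exact pow_lt_one₀ (abs_nonneg φ) hφ two_ne_zero
  refine .of_succ_sub_mul hφ₂ ?_
  have hmean := hu.sq.succ.add ((h.hasCesaroMean_succ_mul hφ hu).const_mul (2 * φ))
  rw [mul_zero, add_zero] at hmean
  convert hmean using 2 with i
  rw [h i]
  ring

lemma hasCesaroMean_mul_succ (h : IsAutoregressive φ u e) (hφ : |φ| < 1)
    (hu : IsEmpiricalWhiteNoise u v) :
    HasCesaroMean (fun i => e (i + 1) * e i) (φ * (v / (1 - φ ^ 2))) := by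
  have hmean := ((h.hasCesaroMean_sq hφ hu).const_mul φ).add (h.hasCesaroMean_succ_mul hφ hu)
  rw [add_zero] at hmean
  convert hmean using 2 with i
  rw [h i]
  ring

end IsAutoregressive

end Autoregression

section Perturbation

variable {k : ℕ} {a b : ℕ → ℝ} {A B M : ℝ} {p q : ℕ → ℕ → ℝ}

lemma abs_mul_sub_mul_le {p q a b η : ℝ} (hη : η ≤ 1) (hp : |p - a| ≤ η) (hq : |q - b| ≤ η) :
    |p * q - a * b| ≤ η * (2 + a ^ 2 + b ^ 2) := by
  have hη₀ : 0 ≤ η := (abs_nonneg _).trans hp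
  calc |p * q - a * b| = |(p - a) * (q - b) + (p - a) * b + a * (q - b)| := by ring_nf
    _ ≤ |(p - a) * (q - b)| + |(p - a) * b| + |a * (q - b)| := abs_add_three _ _ _
    _ = |p - a| * |q - b| + |p - a| * |b| + |a| * |q - b| := by simp only [abs_mul]
    _ ≤ η * 1 + η * |b| + |a| * η := by
      gcongr
      exact hq.trans hη
    _ = η * (1 + |b| + |a|) := by ring
    _ ≤ η * (2 + a ^ 2 + b ^ 2) := by
      refine mul_le_mul_of_nonneg_left ?_ hη₀
      rw [← sq_abs a, ← sq_abs b]
      nlinarith [sq_nonneg (|a| - 1 / 2), sq_nonneg (|b| - 1 / 2)]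

lemma HasCesaroMean.tendsto_sum_Icc_div_of_abs_sub_le {F : ℕ → ℕ → ℝ} {G w : ℕ → ℝ} {W : ℝ}
    (hG : HasCesaroMean G M) (hw : HasCesaroMean w W)
    (hF : ∀ η > 0, ∀ᶠ n in atTop, ∀ i ∈ Finset.Icc k n, |F n i - G i| ≤ η * w i) :
    Tendsto (fun n : ℕ => (∑ i ∈ Finset.Icc k n, F n i) / n) atTop (𝓝 M) := by
  have hweight : (fun n => ∑ i ∈ Finset.Icc k n, (F n i - G i))
      =o[atTop] fun n => ∑ i ∈ Finset.Icc k n, w i := by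
    refine isLittleO_iff.2 fun η hη => (hF η hη).mono fun n hn => ?_
    calc |∑ i ∈ Finset.Icc k n, (F n i - G i)|
        ≤ ∑ i ∈ Finset.Icc k n, η * w i :=
          (Finset.abs_sum_le_sum_abs _ _).trans (Finset.sum_le_sum hn)
      _ = η * ∑ i ∈ Finset.Icc k n, w i := (Finset.mul_sum _ _ _).symm
      _ ≤ η * |∑ i ∈ Finset.Icc k n, w i| := by gcongr; exact le_abs_self _
  have hbig : (fun n => ∑ i ∈ Finset.Icc k n, w i) =O[atTop] fun n : ℕ => (n : ℝ) := by
    refine isBigO_of_div_tendsto_nhds ?_ W (hw.tendsto_sum_Icc_div k)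
    filter_upwards [eventually_ne_atTop 0] with n hn hn₀
    exact absurd (Nat.cast_eq_zero.1 hn₀) hn
  have hlim := (hweight.trans_isBigO hbig).tendsto_div_nhds_zero.add (hG.tendsto_sum_Icc_div k)
  rw [zero_add] at hlim
  exact hlim.congr fun n => by rw [← add_div, Finset.sum_sub_distrib, sub_add_cancel]

lemma tendsto_sum_Icc_mul_div_of_uniformly_close
    (hp : ∀ η > 0, ∀ᶠ n in atTop, ∀ i ∈ Finset.Icc k n, |p n i - a i| ≤ η)
    (hq : ∀ η > 0, ∀ᶠ n in atTop, ∀ i ∈ Finset.Icc k n, |q n i - b i| ≤ η)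
    (ha : HasCesaroMean (fun i => a i ^ 2) A) (hb : HasCesaroMean (fun i => b i ^ 2) B)
    (hab : HasCesaroMean (fun i => a i * b i) M) :
    Tendsto (fun n : ℕ => (∑ i ∈ Finset.Icc k n, p n i * q n i) / n) atTop (𝓝 M) := by
  refine hab.tendsto_sum_Icc_div_of_abs_sub_le (((HasCesaroMean.const 2).add ha).add hb)
    fun η hη => ?_
  have hη' : 0 < min η 1 := lt_min hη one_pos
  filter_upwards [hp _ hη', hq _ hη'] with n hpn hqn i hi
  refine (abs_mul_sub_mul_le (min_le_right η 1) (hpn i hi) (hqn i hi)).trans ?_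
  gcongr
  exact min_le_left η 1

lemma tendsto_lagOne_ratio_of_uniformly_close {r : ℕ → ℕ → ℝ} {e : ℕ → ℝ} {c₀ c₁ : ℝ}
    (hr : ∀ η > 0, ∀ᶠ n in atTop, ∀ i ∈ Finset.Icc 1 n, |r n i - e i| ≤ η)
    (hc₀ : c₀ ≠ 0) (hsq : HasCesaroMean (fun i => e i ^ 2) c₀)
    (hlag : HasCesaroMean (fun i => e (i + 1) * e i) c₁) :
    Tendsto (fun n => (∑ i ∈ Finset.Icc 2 n, r n i * r n (i - 1)) /
      ∑ i ∈ Finset.Icc 2 n, r n i ^ 2) atTop (𝓝 (c₁ / c₀)) := by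
  have hcur : ∀ η > 0, ∀ᶠ n in atTop, ∀ i ∈ Finset.Icc 2 n, |r n i - e i| ≤ η := fun η hη =>
    (hr η hη).mono fun n hn i hi => hn i (Finset.Icc_subset_Icc_left one_le_two hi)
  have hprev : ∀ η > 0, ∀ᶠ n in atTop, ∀ i ∈ Finset.Icc 2 n, |r n (i - 1) - e (i - 1)| ≤ η := by
    refine fun η hη => (hr η hη).mono fun n hn i hi => hn (i - 1) ?_
    rw [Finset.mem_Icc] at hi ⊢
    omega
  have hnum := tendsto_sum_Icc_mul_div_of_uniformly_close hcur hprev hsq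
    (.of_succ (f := fun i => e (i - 1) ^ 2) hsq) (.of_succ (f := fun i => e i * e (i - 1)) hlag)
  have hden := tendsto_sum_Icc_mul_div_of_uniformly_close hcur hcur hsq hsq
    (by simpa only [sq] using hsq)
  refine (hnum.div hden hc₀).congr' ?_
  filter_upwards [eventually_ne_atTop 0] with n hn
  simp only [Pi.div_apply, sq]
  exact div_div_div_cancel_right₀ (Nat.cast_ne_zero.2 hn) _ _

end Perturbation

section StrongLaw

variable {Ω : Type*} [MeasurableSpace Ω] {μ : Measure Ω} {U : ℕ → Ω → ℝ}

lemma ae_hasCesaroMean_sq (hindep : Pairwise fun i j => IndepFun (U i) (U j) μ)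
    (hident : ∀ i, IdentDistrib (U i) (U 0) μ μ) (hint : Integrable (fun ω => U 0 ω ^ 2) μ) :
    ∀ᵐ ω ∂μ, HasCesaroMean (fun i => U i ω ^ 2) (∫ ω, U 0 ω ^ 2 ∂μ) :=
  strong_law_ae_real (fun i ω => U i ω ^ 2) hint
    (fun _ _ hij => (hindep hij).comp (measurable_id.pow_const 2) (measurable_id.pow_const 2))
    fun i => (hident i).comp (measurable_id.pow_const 2)

-- Products at lag `d` whose indices agree modulo `d + 1` involve disjoint sets of variables.
lemma indepFun_shift_mul_residueClass (hindep : iIndepFun U μ) (hmeas : ∀ i, AEMeasurable (U i) μ)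
    {d : ℕ} (hd : d ≠ 0) (r : ℕ) :
    Pairwise fun l m => IndepFun
      (fun ω => U (r + (d + 1) * l + d) ω * U (r + (d + 1) * l) ω)
      (fun ω => U (r + (d + 1) * m + d) ω * U (r + (d + 1) * m) ω) μ := by
  have hne (l m : ℕ) : (d + 1) * l ≠ (d + 1) * m + d := by
    intro h
    have hmod := congrArg (· % (d + 1)) h
    simp only [Nat.mul_mod_right, Nat.mul_add_mod, Nat.mod_eq_of_lt d.lt_succ_self] at hmod
    exact hd hmod.symm
  intro l m hlm
  have hmul : (d + 1) * l ≠ (d + 1) * m := fun h => hlm (Nat.mul_left_cancel d.succ_pos h)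
  have hlm' := hne l m
  have hml := hne m l
  exact hindep.indepFun_mul_mul₀ hmeas _ _ _ _ (by omega) (by omega) (by omega) (by omega)

lemma ae_hasCesaroMean_shift_mul (hindep : iIndepFun U μ)
    (hident : ∀ i, IdentDistrib (U i) (U 0) μ μ) (hint : Integrable (U 0) μ)
    {d : ℕ} (hd : d ≠ 0) :
    ∀ᵐ ω ∂μ, HasCesaroMean (fun i => U (i + d) ω * U i ω) ((∫ ω, U 0 ω ∂μ) ^ 2) := by
  have := hindep.isProbabilityMeasure
  have hmeas (i : ℕ) := (hident i).aemeasurable_fst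
  have hint' (i : ℕ) : Integrable (U i) μ := (hident i).integrable_iff.2 hint
  have hpair (i : ℕ) : IndepFun (U (i + d)) (U i) μ := hindep.indepFun (by omega)
  have hclass (r : ℕ) : ∀ᵐ ω ∂μ, HasCesaroMean
      (fun l => U (r + (d + 1) * l + d) ω * U (r + (d + 1) * l) ω) ((∫ ω, U 0 ω ∂μ) ^ 2) := by
    have hmean : ∫ ω, U (r + (d + 1) * 0 + d) ω * U (r + (d + 1) * 0) ω ∂μ
        = (∫ ω, U 0 ω ∂μ) ^ 2 := by
      rw [(hpair _).integral_fun_mul_eq_mul_integral (hint' _).aestronglyMeasurable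
        (hint' _).aestronglyMeasurable, (hident _).integral_eq, (hident (r + _)).integral_eq, sq]
    rw [← hmean]
    exact strong_law_ae_real (fun l ω => U (r + (d + 1) * l + d) ω * U (r + (d + 1) * l) ω)
      ((hpair _).integrable_mul (hint' _) (hint' _))
      (indepFun_shift_mul_residueClass hindep hmeas hd r)
      fun l => (((hident _).trans (hident _).symm).prodMk ((hident _).trans (hident _).symm)
        (hpair _) (hpair _)).comp measurable_mul
  filter_upwards [ae_all_iff.2 hclass] with ω hω
  exact .of_residueClasses d.succ_pos fun r _ => hω r

lemma ae_isEmpiricalWhiteNoise (hindep : iIndepFun U μ)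
    (hident : ∀ i, IdentDistrib (U i) (U 0) μ μ) (hmean : ∫ ω, U 0 ω ∂μ = 0)
    (hint : Integrable (fun ω => U 0 ω ^ 2) μ) :
    ∀ᵐ ω ∂μ, IsEmpiricalWhiteNoise (fun i => U i ω) (∫ ω, U 0 ω ^ 2 ∂μ) := by
  have := hindep.isProbabilityMeasure
  have hint₁ : Integrable (U 0) μ :=
    ((memLp_two_iff_integrable_sq (hident 0).aemeasurable_fst.aestronglyMeasurable).2
      hint).integrable one_le_two
  have hlag (k : ℕ) := ae_hasCesaroMean_shift_mul hindep hident hint₁ k.succ_ne_zero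
  rw [hmean, zero_pow two_ne_zero] at hlag
  filter_upwards [ae_hasCesaroMean_sq (fun _ _ => hindep.indepFun) hident hint,
    ae_all_iff.2 hlag] with ω hsq hmul
  exact ⟨hsq, hmul⟩

end StrongLaw

lemma isAutoregressive_of_hasSum {φ : ℝ} {u e : ℤ → ℝ}
    (h : ∀ i : ℤ, HasSum (fun j : ℕ => φ ^ j * u (i - j)) (e i)) :
    IsAutoregressive φ (fun i : ℕ => u i) (fun i : ℕ => e i) := by
  intro i
  have htail : HasSum (fun j : ℕ => φ ^ (j + 1) * u ((i + 1 : ℕ) - (j + 1 : ℕ))) (φ * e i) := by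
    simpa only [pow_succ', mul_assoc, Nat.cast_add_one, add_sub_add_right_eq_sub] using
      (h i).mul_left φ
  have hsplit := HasSum.zero_add (f := fun j : ℕ => φ ^ j * u ((i + 1 : ℕ) - j)) htail
  rw [pow_zero, one_mul, Nat.cast_zero, sub_zero, add_comm (u _)] at hsplit
  exact (h (i + 1 : ℕ)).unique hsplit

lemma one_add_mul_pos {xm xM γ y : ℝ} (hxm : 0 < xm) (hxM : 0 < xM)
    (hγ : γ ∈ Ioo (-(1 / xM)) (1 / xm)) (hy : y ∈ Icc (-xm) xM) : 0 < 1 + γ * y := by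
  have hm : γ * xm < 1 := (lt_div_iff₀ hxm).1 hγ.2
  have hM : -γ * xM < 1 := (lt_div_iff₀ hxM).1 (neg_lt.1 hγ.1)
  rcases le_total 0 γ with hγ₀ | hγ₀
  · nlinarith [hy.1]
  · nlinarith [hy.2]

lemma tendstoUniformlyOn_log_one_add_mul {xm xM γ₀ : ℝ} (hxm : 0 < xm) (hxM : 0 < xM)
    (hγ₀ : γ₀ ∈ Ioo (-(1 / xM)) (1 / xm)) :
    TendstoUniformlyOn (fun γ y => Real.log (1 + γ * y)) (fun y => Real.log (1 + γ₀ * y))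
      (𝓝 γ₀) (Icc (-xm) xM) := by
  have hcont : ContinuousOn (Function.uncurry fun γ y : ℝ => Real.log (1 + γ * y))
      (Ioo (-(1 / xM)) (1 / xm) ×ˢ Icc (-xm) xM) :=
    ContinuousOn.log (by fun_prop) fun w hw => (one_add_mul_pos hxm hxM hw.1 hw.2).ne'
  intro u hu
  obtain ⟨v, hv, hvu⟩ := isCompact_Icc.mem_uniformity_of_prod hcont hγ₀ (symm_le_uniformity hu)
  rw [isOpen_Ioo.nhdsWithin_eq hγ₀] at hv
  filter_upwards [hv] with γ hγ y hy using hvu γ hγ y hy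

lemma eventually_abs_resid_sub_le {Ω : Type*} {Δ xm xM γ₀ : ℝ} {x z g₀ : ℝ → ℝ} {T : Set ℝ}
    (hΔ : 0 ≤ Δ) (hxm : 0 < xm) (hxM : 0 < xM) (hx : MapsTo x (Icc 0 Δ) (Icc (-xm) xM))
    (hz : MapsTo z (Icc 0 Δ) T) (hγ₀ : γ₀ ∈ Ioo (-(1 / xM)) (1 / xm)) {γ : ℕ → ℝ}
    (hγ : Tendsto γ atTop (𝓝 γ₀)) {g : ℕ → ℝ → ℝ}
    (hg : TendstoUniformlyOn (fun n t => Real.log (g n t)) (fun t => Real.log (g₀ t)) atTop T)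
    (ε : ℤ → Ω → ℝ) (ω : Ω) {η : ℝ} (hη : 0 < η) :
    ∀ᶠ n in atTop, ∀ i ∈ Finset.Icc 1 n,
      |resid Δ γ₀ x z g₀ ε (γ n) (g n) n i ω - ε i ω| ≤ η := by
  have hlog := Metric.tendstoUniformlyOn_iff.1
    (tendstoUniformlyOn_log_one_add_mul hxm hxM hγ₀) _ (half_pos hη)
  filter_upwards [hγ.eventually hlog, Metric.tendstoUniformlyOn_iff.1 hg _ (half_pos hη)]
    with n hγn hgn i hi
  have hmem : (i : ℝ) * Δ / n ∈ Icc 0 Δ := by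
    refine ⟨by positivity, div_le_of_le_mul₀ n.cast_nonneg hΔ ?_⟩
    rw [mul_comm]
    exact mul_le_mul_of_nonneg_left (Nat.cast_le.2 (Finset.mem_Icc.1 hi).2) hΔ
  have hx' := hγn _ (hx hmem)
  have hz' := hgn _ (hz hmem)
  rw [Real.dist_eq] at hx' hz'
  set w := (i : ℝ) * Δ / n
  calc |resid Δ γ₀ x z g₀ ε (γ n) (g n) n i ω - ε i ω|
      = |(Real.log (1 + γ₀ * x w) - Real.log (1 + γ n * x w))
          + (Real.log (g₀ (z w)) - Real.log (g n (z w)))| := by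
        congr 1
        simp only [resid, w]
        ring
    _ ≤ η / 2 + η / 2 := (abs_add_le _ _).trans (add_le_add hx'.le hz'.le)
    _ = η := add_halves η

theorem stmt15_general {Ω : Type*} [MeasurableSpace Ω] {μ : Measure Ω}
    {Δ xm xM : ℝ} (hΔ : 0 ≤ Δ) (hxm : 0 < xm) (hxM : 0 < xM) {x z : ℝ → ℝ} {T : Set ℝ}
    (hx : MapsTo x (Icc 0 Δ) (Icc (-xm) xM)) (hz : MapsTo z (Icc 0 Δ) T)
    {U : ℕ → Ω → ℝ} (hUindep : iIndepFun U μ) (hUident : ∀ i, IdentDistrib (U i) (U 0) μ μ)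
    (hUmean : ∫ ω, U 0 ω ∂μ = 0) (hUvar : ∫ ω, U 0 ω ^ 2 ∂μ ≠ 0)
    {φ : ℝ} (hφ : |φ| < 1) {ε : ℤ → Ω → ℝ}
    (hε : ∀ᵐ ω ∂μ, IsAutoregressive φ (fun i => U i ω) (fun i : ℕ => ε i ω))
    {γ₀ : ℝ} (hγ₀ : γ₀ ∈ Ioo (-(1 / xM)) (1 / xm)) {γtil : ℕ → Ω → ℝ}
    (hγtil : ∀ᵐ ω ∂μ, Tendsto (fun n => γtil n ω) atTop (𝓝 γ₀))
    {g₀ : ℝ → ℝ} (hg₀ : ∀ t ∈ T, 0 < g₀ t) {gtil : ℕ → Ω → ℝ → ℝ}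
    (hgtilpos : ∀ n ω, ∀ t ∈ T, 0 < gtil n ω t)
    (hgtil : ∀ᵐ ω ∂μ, TendstoUniformlyOn (fun n t => Real.log (gtil n ω t))
      (fun t => Real.log (g₀ t)) atTop T) :
    ∀ᵐ ω ∂μ, Tendsto (fun n => phiTil Δ γ₀ x z g₀ ε (γtil n ω) (gtil n ω) n ω)
      atTop (𝓝 φ) := by
  have hφ₂ : 1 - φ ^ 2 ≠ 0 := (sub_pos.2 ((sq_lt_one_iff_abs_lt_one φ).2 hφ)).ne'
  have hc₀ := div_ne_zero hUvar hφ₂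
  filter_upwards [ae_isEmpiricalWhiteNoise hUindep hUident hUmean (.of_integral_ne_zero hUvar),
    hε, hγtil, hgtil] with ω hnoise har hγ hg
  rw [← mul_div_cancel_right₀ φ hc₀]
  exact tendsto_lagOne_ratio_of_uniformly_close
    (fun η hη => eventually_abs_resid_sub_le hΔ hxm hxM hx hz hγ₀ hγ hg ε ω hη) hc₀
    (har.hasCesaroMean_sq hφ hnoise) (har.hasCesaroMean_mul_succ hφ hnoise)

/-- Theorem 4(i): if `γ̃ₙ → γ₀` a.s. and
`sup_{t∈[0,A]} |log g̃ₙ(t) - log g₀(t)| → 0` a.s., then the autoregression-coefficient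
estimator `φ̃ₙ` built from the residuals converges to `φ` almost surely. -/
theorem stmt15
    {Ω : Type*} [MeasurableSpace Ω] (μ : Measure Ω) [IsProbabilityMeasure μ]
    (Δ A xm xM : ℝ) (hΔ : 0 < Δ) (hA : 0 < A) (hxm : 0 < xm) (hxM : 0 < xM)
    (x z : ℝ → ℝ)
    (hxcont : ContinuousOn x (Icc 0 Δ))
    (hxrange : ∀ w ∈ Icc (0 : ℝ) Δ, x w ∈ Ioo (-xm) xM)
    (hzcont : ContinuousOn z (Icc 0 Δ))
    (hzrange : ∀ w ∈ Icc (0 : ℝ) Δ, z w ∈ Icc 0 A)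
    (hzmono : StrictMonoOn z (Icc 0 Δ))
    (U : ℤ → Ω → ℝ) (hUmeas : ∀ j, Measurable (U j))
    (hUindep : iIndepFun U μ)
    (hUident : ∀ j, μ.map (U j) = μ.map (U 0))
    (σ : ℝ) (hσ : 0 < σ)
    (hUmean : ∫ ω, U 0 ω ∂μ = 0)
    (hUvar : ∫ ω, (U 0 ω) ^ 2 ∂μ = σ ^ 2)
    (hU8 : Integrable (fun ω => (U 0 ω) ^ 8) μ)
    (φ : ℝ) (hφ0 : φ ≠ 0) (hφ1 : |φ| < 1)
    (ε : ℤ → Ω → ℝ) (hεmeas : ∀ i, Measurable (ε i))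
    (hεsum : ∀ᵐ ω ∂μ, ∀ i : ℤ, HasSum (fun j : ℕ => φ ^ j * U (i - (j : ℤ)) ω) (ε i ω))
    (γ₀ : ℝ) (hγ₀ : γ₀ ∈ Ioo (-(1 / xM)) (1 / xm))
    (g₀ : ℝ → ℝ) (c : ℝ) (hc : 0 < c)
    (hg₀lb : ∀ t ∈ Icc (0 : ℝ) A, c ≤ g₀ t)
    (hg₀cont : ContinuousOn g₀ (Icc 0 A))
    (hg₀anti : AntitoneOn g₀ (Icc 0 A))
    (γtil : ℕ → Ω → ℝ)
    (hγtilmem : ∀ n ω, γtil n ω ∈ Icc (-(1 / xM)) (1 / xm))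
    (hγtilconv : ∀ᵐ ω ∂μ, Tendsto (fun n : ℕ => γtil n ω) atTop (𝓝 γ₀))
    (gtil : ℕ → Ω → ℝ → ℝ)
    (hgtilpos : ∀ n ω, ∀ t ∈ Icc (0 : ℝ) A, 0 < gtil n ω t)
    (hgtilcont : ∀ n ω, ContinuousOn (gtil n ω) (Icc 0 A))
    (hgtilconv : ∀ᵐ ω ∂μ, ∀ e > (0 : ℝ), ∃ N : ℕ, ∀ n ≥ N, ∀ t ∈ Icc (0 : ℝ) A,
      |Real.log (gtil n ω t) - Real.log (g₀ t)| < e)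
    :
    ∀ᵐ ω ∂μ, Tendsto
      (fun n : ℕ => phiTil Δ γ₀ x z g₀ ε (γtil n ω) (gtil n ω) n ω)
      atTop (𝓝 φ) := by
  have har : ∀ᵐ ω ∂μ, IsAutoregressive φ (fun i : ℕ => U i ω) (fun i : ℕ => ε i ω) :=
    hεsum.mono fun ω hω =>
      isAutoregressive_of_hasSum (u := fun i => U i ω) (e := fun i => ε i ω) hω
  have hunif : ∀ᵐ ω ∂μ, TendstoUniformlyOn (fun n t => Real.log (gtil n ω t))
      (fun t => Real.log (g₀ t)) atTop (Icc 0 A) := by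
    refine hgtilconv.mono fun ω hω => Metric.tendstoUniformlyOn_iff.2 fun e he => ?_
    simp only [Real.dist_eq, abs_sub_comm (Real.log (g₀ _))]
    exact eventually_atTop.2 (hω e he)
  exact stmt15_general hΔ.le hxm hxM (fun w hw => Ioo_subset_Icc_self (hxrange w hw)) hzrange
    (hUindep.precomp Nat.cast_injective)
    (fun i => ⟨(hUmeas i).aemeasurable, (hUmeas 0).aemeasurable, hUident i⟩) hUmean
    (hUvar.trans_ne (pow_pos hσ 2).ne') hφ1 har hγ₀ hγtilconv
    (fun t ht => hc.trans_le (hg₀lb t ht)) hgtilpos hunif
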